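/- For the Weierstrass zeta function of the lattice L_ω = ω·ℤ[τ] with invariants g₂ = 0, g₃ = 1, one has ζ(√−3·ω/6, L_ω) = −π·i/(3ω) − (i/2)·∛4. -/

import Mathlib

noncomputable section

open Complex Real ComplexConjugate

/-- `τ = (−1+√−3)/2`, a primitive cube root of unity. -/
def tau : ℂ := (-1 + Real.sqrt 3 * Complex.I) / 2

/-- `√−3 = 1 + 2τ`, the square root of `−3` with positive imaginary part. -/
def sqrtm3 : ℂ := Real.sqrt 3 * Complex.I

/-- The ring of integers `O_K = ℤ[τ]` of `K = ℚ(√−3)`, as a subring of `ℂ`. -/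
def Eis : Subring ℂ := Subring.closure {tau}

/-- `τ` as an element of `ℤ[τ]`. -/
def tauO : Eis := ⟨tau, Subring.subset_closure rfl⟩

/-- `√−3` as an element of `ℤ[τ]`. -/
def sqrtm3O : Eis := 1 + 2 * tauO

/-- Membership in the lattice `L_ω = ω·ℤ[τ]`. -/
def inLattice (ω : ℝ) (z : ℂ) : Prop := ∃ a : Eis, z = (ω : ℂ) * a

/-- The Weierstrass `℘`-function of the lattice `L_ω = ω·ℤ[τ]`. -/
def wp (ω : ℝ) (z : ℂ) : ℂ :=
  1 / z ^ 2 + ∑' a : {w : ℂ // inLattice ω w ∧ w ≠ 0},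
    (1 / (z - (a : ℂ)) ^ 2 - 1 / (a : ℂ) ^ 2)

/-- The Weierstrass `ζ`-function of the lattice `L_ω = ω·ℤ[τ]`. -/
def wzeta (ω : ℝ) (z : ℂ) : ℂ :=
  1 / z + ∑' a : {w : ℂ // inLattice ω w ∧ w ≠ 0},
    (1 / (z - (a : ℂ)) + 1 / (a : ℂ) + z / (a : ℂ) ^ 2)

/-- The real cube root of 2, as a complex number. -/
def cbrt2 : ℂ := ((2 : ℝ) ^ ((1 : ℝ) / 3) : ℝ)

/-- The real cube root of 4, as a complex number. -/
def cbrt4 : ℂ := ((4 : ℝ) ^ ((1 : ℝ) / 3) : ℝ)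

/-!
Put `u = √−3·ω/3` and `w = √−3·ω/2`, so that `u - w = -√−3·ω/6` and `u + w` is the same point
translated by the period `2·w`. As `℘'(w) = 0`, the addition formula at `(u, w)` reads
`(ζ(u + w) + ζ(u - w) - 2ζ(u)) (℘(u) - ℘(w)) = ℘'(u)`, and all that remains is to evaluate the
other terms. The difference of its two sides is odd and elliptic in `u` without poles, hence zero
by Liouville's theorem.

Since `τu` is congruent to `u` modulo the lattice, complex multiplication by `τ` gives `℘(u) = 0`
and expresses `ζ(u)` through the quasi-periods. The Legendre-type constant `η(ω)` is `G2(ρ) / ω`,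
and `G2(ρ)` follows from the transformation of `G2` under `S`. The differential equation gives
`4℘(w)³ = 1` and `℘'(u)² = -1`, where the sign of `℘'(u) = -i` is decided by the monotonicity of
`℘'/i` along the imaginary axis, on which `℘'' = 6℘² ≥ 0`.
-/

open Filter Topology PeriodPair EisensteinSeries
open UpperHalfPlane hiding I

variable (L : PeriodPair)

/-- The Weierstrass `ζ`-function of the lattice of `L`. Since `1 / 0 = 0`, the term of `l = 0` is
`1 / z`, and at a lattice point the polar term is dropped from the sum. -/
def weierstrassZeta (z : ℂ) : ℂ := ∑' l : L.lattice, (1 / (z - l) + 1 / l + z / l ^ 2)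

/-- The Weierstrass `ζ`-function with the `l₀`-term missing, which is regular at `l₀`; compare
`PeriodPair.weierstrassPExcept`. -/
def weierstrassZetaExcept (l₀ : L.lattice) (z : ℂ) : ℂ :=
  ∑' l : L.lattice, if l = l₀ then 0 else (1 / (z - l) + 1 / l + z / l ^ 2)

local notation "ζ[" L "]" => weierstrassZeta L

lemma norm_weierstrassZeta_summand_le {r : ℝ} {z l : ℂ} (hr : 0 < r) (hz : ‖z‖ < r)
    (hl : 2 * r ≤ ‖l‖) : ‖1 / (z - l) + 1 / l + z / l ^ 2‖ ≤ 2 * r ^ 2 * ‖l‖ ^ (-3 : ℝ) := by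
  have hl_pos : 0 < ‖l‖ := by linarith
  have hl₀ : l ≠ 0 := norm_pos_iff.mp hl_pos
  have hzl : ‖l‖ / 2 ≤ ‖z - l‖ := by
    rw [norm_sub_rev]
    exact .trans (by linarith) (norm_sub_norm_le l z)
  have hzl₀ : z - l ≠ 0 := norm_pos_iff.mp (by linarith)
  calc ‖1 / (z - l) + 1 / l + z / l ^ 2‖
      = ‖z ^ 2 / ((z - l) * l ^ 2)‖ := by congr 1; field
    _ = ‖z‖ ^ 2 / (‖z - l‖ * ‖l‖ ^ 2) := by simp
    _ ≤ r ^ 2 / (‖l‖ / 2 * ‖l‖ ^ 2) := by gcongr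
    _ = 2 * r ^ 2 / ‖l‖ ^ 3 := by field
    _ = _ := by norm_cast

lemma hasSum_weierstrassZeta (z : ℂ) :
    HasSum (fun l : L.lattice ↦ 1 / (z - l) + 1 / l + z / l ^ 2) (ζ[L] z) := by
  refine (L.hasSumLocallyUniformly_aux (fun l z ↦ 1 / (z - l) + 1 / l + z / l ^ 2)
    (fun r l ↦ 2 * r ^ 2 * ‖l‖ ^ (-3 : ℝ))
    (fun _ _ ↦ (ZLattice.summable_norm_rpow _ _ (by simp; norm_num)).mul_left _)
    fun r hr ↦ eventually_atTop.mpr ⟨2 * r, ?_⟩).hasSum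
  rintro _ hR z hz l rfl
  exact norm_weierstrassZeta_summand_le hr hz hR

lemma hasSum_weierstrassZetaExcept (l₀ : L.lattice) (z : ℂ) :
    HasSum (fun l : L.lattice ↦ if l = l₀ then 0 else (1 / (z - l) + 1 / l + z / l ^ 2))
      (weierstrassZetaExcept L l₀ z) := by
  refine (((hasSum_weierstrassZeta L z).sub (hasSum_ite_eq l₀ (1 / (z - l₀) + 1 / l₀ +
    z / (l₀ : ℂ) ^ 2))).summable.congr fun l ↦ ?_).hasSum
  split_ifs with hl <;> simp [hl]

lemma weierstrassZetaExcept_add (l₀ : L.lattice) (z : ℂ) :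
    weierstrassZetaExcept L l₀ z + (1 / (z - l₀) + 1 / l₀ + z / l₀ ^ 2) = ζ[L] z := by
  refine HasSum.unique (((hasSum_weierstrassZetaExcept L l₀ z).add (hasSum_ite_eq l₀
    (1 / (z - l₀) + 1 / l₀ + z / (l₀ : ℂ) ^ 2))).congr_fun fun l ↦ ?_) (hasSum_weierstrassZeta L z)
  split_ifs with hl <;> simp [hl]

lemma hasDerivAt_weierstrassZetaExcept {l₀ : L.lattice} {z : ℂ}
    (hz : z ∈ (L.lattice \ {(l₀ : ℂ)} : Set ℂ)ᶜ) :
    HasDerivAt (weierstrassZetaExcept L l₀) (-℘[L - l₀] z) z := by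
  refine hasDerivAt_of_tendstoLocallyUniformlyOn L.isOpen_compl_lattice_sdiff
    (L.hasSumLocallyUniformly_weierstrassPExcept l₀).tendstoLocallyUniformlyOn.neg
    (.of_forall fun s x hx ↦ ?_) (fun x _ ↦ hasSum_weierstrassZetaExcept L l₀ x) hz
  simp only [Pi.neg_apply, ← Finset.sum_neg_distrib, SetLike.coe_eq_coe]
  refine HasDerivAt.fun_sum fun l _ ↦ ?_
  split_ifs with hl
  · simpa using hasDerivAt_const x (0 : ℂ)
  · have hxl : x - l ≠ 0 := fun h ↦ hl (by
      obtain rfl := sub_eq_zero.mp h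
      simpa using hx)
    simp only [one_div]
    refine (((((hasDerivAt_id' x).sub_const (l : ℂ)).fun_inv hxl).add_const (l : ℂ)⁻¹).fun_add
      ((hasDerivAt_id' x).div_const ((l : ℂ) ^ 2))).congr_deriv ?_
    ring

lemma weierstrassZeta_eq_weierstrassZetaExcept_zero_add (z : ℂ) :
    ζ[L] z = weierstrassZetaExcept L 0 z + 1 / z := by
  simp [← weierstrassZetaExcept_add L 0 z]

lemma hasDerivAt_weierstrassZeta {z : ℂ} (hz : z ∉ L.lattice) :
    HasDerivAt ζ[L] (-℘[L] z) z := by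
  have hz₀ : z ≠ 0 := fun h ↦ hz (h ▸ zero_mem _)
  rw [funext (weierstrassZeta_eq_weierstrassZetaExcept_zero_add L), ← L.weierstrassPExcept_add 0]
  simp only [one_div]
  refine ((hasDerivAt_weierstrassZetaExcept L (l₀ := 0) (by simp [hz])).fun_add
    (hasDerivAt_inv hz₀)).congr_deriv ?_
  simp [add_comm, sub_eq_add_neg]

section Symmetry

variable {L} {c : ℂ}

lemma tsum_lattice_mul_left (hc₀ : c ≠ 0) (hc : ∀ z, c * z ∈ L.lattice ↔ z ∈ L.lattice)
    (f : ℂ → ℂ) : ∑' l : L.lattice, f (c * l) = ∑' l : L.lattice, f l :=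
  ((Equiv.mulLeft₀ c hc₀).subtypeEquiv fun z ↦ (hc z).symm).tsum_eq fun l : L.lattice ↦ f l

lemma weierstrassZeta_mul_left (hc₀ : c ≠ 0) (hc : ∀ z, c * z ∈ L.lattice ↔ z ∈ L.lattice)
    (z : ℂ) : ζ[L] (c * z) = c⁻¹ * ζ[L] z := by
  rw [weierstrassZeta, weierstrassZeta, ← tsum_mul_left,
    ← tsum_lattice_mul_left hc₀ hc fun l ↦ 1 / (c * z - l) + 1 / l + c * z / l ^ 2]
  refine tsum_congr fun l ↦ ?_
  rw [← mul_sub]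
  simp only [mul_inv, mul_pow, div_eq_mul_inv]
  field

lemma weierstrassP_mul_left (hc₀ : c ≠ 0) (hc : ∀ z, c * z ∈ L.lattice ↔ z ∈ L.lattice)
    (z : ℂ) : ℘[L] (c * z) = (c ^ 2)⁻¹ * ℘[L] z := by
  rw [weierstrassP, weierstrassP, ← tsum_mul_left,
    ← tsum_lattice_mul_left hc₀ hc fun l ↦ 1 / (c * z - l) ^ 2 - 1 / l ^ 2]
  refine tsum_congr fun l ↦ ?_
  rw [← mul_sub]
  simp only [one_div, mul_inv, mul_pow]
  ring

lemma G_eq_zero_of_pow_ne_one (hc₀ : c ≠ 0) (hc : ∀ z, c * z ∈ L.lattice ↔ z ∈ L.lattice)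
    {n : ℕ} (hn : c ^ n ≠ 1) : L.G n = 0 := by
  have h : L.G n = (c ^ n)⁻¹ * L.G n := by
    conv_lhs => rw [PeriodPair.G, ← tsum_lattice_mul_left hc₀ hc fun l ↦ (l ^ n)⁻¹]
    rw [PeriodPair.G, ← tsum_mul_left]
    simp only [mul_pow, mul_inv]
  by_contra hG
  exact hn (inv_eq_one.mp (mul_eq_right₀ hG |>.mp h.symm))

lemma weierstrassZeta_neg (z : ℂ) : ζ[L] (-z) = -ζ[L] z := by
  simpa [neg_one_mul] using
    weierstrassZeta_mul_left (L := L) (c := -1) (by simp) (fun z ↦ by simp) z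

lemma weierstrassZeta_zero : ζ[L] 0 = 0 := by
  simpa [self_eq_neg] using weierstrassZeta_neg (L := L) 0

end Symmetry

section Conj

variable {L} (hL : ∀ z, conj z ∈ L.lattice ↔ z ∈ L.lattice)
include hL

lemma tsum_lattice_conj (f : ℂ → ℂ) : ∑' l : L.lattice, f (conj l) = ∑' l : L.lattice, f l :=
  ((starRingAut (R := ℂ)).toEquiv.subtypeEquiv fun z ↦ (hL z).symm).tsum_eq
    fun l : L.lattice ↦ f l

lemma weierstrassP_conj (z : ℂ) : ℘[L] (conj z) = conj (℘[L] z) := by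
  rw [weierstrassP, weierstrassP, Complex.conj_tsum,
    ← tsum_lattice_conj hL fun l ↦ 1 / (conj z - l) ^ 2 - 1 / l ^ 2]
  simp

end Conj

section QuasiPeriod

lemma hasDerivAt_weierstrassZeta_sub_inv (l₀ : L.lattice) :
    HasDerivAt (fun z ↦ ζ[L] z - (z - l₀)⁻¹) 0 l₀ := by
  have h := ((hasDerivAt_weierstrassZetaExcept L (l₀ := l₀) (z := l₀) (by simp)).add_const
    (1 / (l₀ : ℂ))).fun_add ((hasDerivAt_id' (l₀ : ℂ)).div_const ((l₀ : ℂ) ^ 2))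
  rw [L.weierstrassPExcept_def, L.weierstrassP_coe] at h
  refine (h.congr_deriv (by simp)).congr_of_eventuallyEq (.of_forall fun z ↦ ?_)
  simp only [← weierstrassZetaExcept_add L l₀ z]
  ring

lemma hasDerivAt_weierstrassZeta_add_coe_sub (l : L.lattice) (z : ℂ) :
    HasDerivAt (fun z ↦ ζ[L] (z + l) - ζ[L] z) 0 z := by
  by_cases hz : z ∈ L.lattice
  · lift z to L.lattice using hz with l₀
    have h := (hasDerivAt_weierstrassZeta_sub_inv L (l₀ + l)).comp_add_const (l₀ : ℂ) l
    simpa using h.fun_sub (hasDerivAt_weierstrassZeta_sub_inv L l₀)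
  · have hzl : z + l ∉ L.lattice := fun h ↦ hz (by simpa using sub_mem h l.2)
    simpa using ((hasDerivAt_weierstrassZeta L hzl).comp_add_const z (l : ℂ)).fun_sub
      (hasDerivAt_weierstrassZeta L hz)

/-- The values of `weierstrassZeta L` at lattice points, where the pole is dropped, are the
quasi-periods of the Weierstrass `ζ`-function. -/
lemma weierstrassZeta_add_coe (z : ℂ) (l : L.lattice) : ζ[L] (z + l) = ζ[L] z + ζ[L] l := by
  have h := is_const_of_deriv_eq_zero
    (fun z ↦ (hasDerivAt_weierstrassZeta_add_coe_sub L l z).differentiableAt)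
    (fun z ↦ (hasDerivAt_weierstrassZeta_add_coe_sub L l z).deriv) z 0
  rw [zero_add, weierstrassZeta_zero, sub_zero] at h
  rw [← h]
  ring

lemma weierstrassZeta_sub_coe (z : ℂ) (l : L.lattice) : ζ[L] (z - l) = ζ[L] z - ζ[L] l := by
  simpa [sub_eq_add_neg, weierstrassZeta_neg] using weierstrassZeta_add_coe L z (-l)

end QuasiPeriod

section Liouville

variable {L} {f : ℂ → ℂ}

lemma exists_eq_const_of_periodic_of_differentiable (hper : ∀ l : L.lattice, f.Periodic l)
    (hf : Differentiable ℂ f) : ∃ c, ∀ x, f x = c :=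
  ⟨f 0, fun x ↦ hf.apply_eq_apply_of_bounded
    (IsZLattice.isCompact_range_of_periodic L.lattice f hf.continuous
      fun z l hl ↦ hper ⟨l, hl⟩ z).isBounded x 0⟩

lemma exists_eventuallyEq_const_of_periodic_of_meromorphicOrderAt_nonneg
    (hper : ∀ l : L.lattice, f.Periodic l) (hf : Meromorphic f)
    (hord : ∀ x, 0 ≤ meromorphicOrderAt f x) : ∃ c, ∀ x, f =ᶠ[𝓝[≠] x] fun _ ↦ c := by
  have hf' : MeromorphicOn f Set.univ := fun x _ ↦ hf x
  set g := toMeromorphicNFOn f Set.univ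
  have hfg (x : ℂ) : f =ᶠ[𝓝[≠] x] g :=
    (hf'.toMeromorphicNFOn_eq_self_on_nhdsNE (Set.mem_univ x)).symm
  have hg (x : ℂ) : AnalyticAt ℂ g x := by
    refine (meromorphicNFOn_toMeromorphicNFOn f Set.univ
      (Set.mem_univ x)).meromorphicOrderAt_nonneg_iff_analyticAt.mp ?_
    rw [meromorphicOrderAt_toMeromorphicNFOn hf' (Set.mem_univ x)]
    exact hord x
  have hg_per (l : L.lattice) : g.Periodic l := fun x ↦ by
    have htendsto : Tendsto (· + (l : ℂ)) (𝓝[≠] x) (𝓝[≠] (x + l)) :=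
      tendsto_nhdsWithin_iff.mpr ⟨(continuous_add_const _).continuousWithinAt,
        eventually_mem_nhdsWithin.mono fun y hy ↦ by simpa using hy⟩
    have hcont : ContinuousAt (fun y ↦ g (y + l)) x :=
      (hg (x + l)).continuousAt.comp (f := (· + (l : ℂ))) (by fun_prop)
    refine ((hcont.eventuallyEq_nhds_iff_eventuallyEq_nhdsNE (hg x).continuousAt).mp ?_).eq_of_nhds
    filter_upwards [htendsto.eventually (hfg (x + l)), hfg x] with y hyl hy
    rw [← hyl, ← hy, hper l y]
  obtain ⟨c, hc⟩ := exists_eq_const_of_periodic_of_differentiable hg_per fun x ↦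
    (hg x).differentiableAt
  exact ⟨c, fun x ↦ (hfg x).trans (.of_forall hc)⟩

end Liouville

section AdditionFormula

variable {L}

lemma analyticAt_weierstrassZetaExcept (l₀ : L.lattice) :
    AnalyticAt ℂ (weierstrassZetaExcept L l₀) l₀ :=
  DifferentiableOn.analyticAt (fun _ hz ↦
      (hasDerivAt_weierstrassZetaExcept L hz).differentiableAt.differentiableWithinAt)
    (L.compl_lattice_sdiff_singleton_mem_nhds (l₀ : ℂ))

lemma analyticAt_weierstrassZeta {z : ℂ} (hz : z ∉ L.lattice) : AnalyticAt ℂ ζ[L] z :=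
  DifferentiableOn.analyticAt (fun _ hx ↦
      (hasDerivAt_weierstrassZeta L hx).differentiableAt.differentiableWithinAt)
    (L.isClosed_lattice.isOpen_compl.mem_nhds hz)

lemma meromorphic_weierstrassZeta : Meromorphic ζ[L] := fun x ↦ by
  by_cases hx : x ∈ L.lattice
  · lift x to L.lattice using hx with l₀
    rw [← funext (weierstrassZetaExcept_add L l₀)]
    have := analyticAt_weierstrassZetaExcept l₀
    fun_prop
  · exact (analyticAt_weierstrassZeta hx).meromorphicAt

lemma neg_one_le_meromorphicOrderAt_weierstrassZeta (x : ℂ) : -1 ≤ meromorphicOrderAt ζ[L] x := by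
  by_cases hx : x ∈ L.lattice
  · lift x to L.lattice using hx with l₀
    have hreg : AnalyticAt ℂ
        (fun z ↦ weierstrassZetaExcept L l₀ z + (1 / (l₀ : ℂ) + z * ((l₀ : ℂ) ^ 2)⁻¹)) l₀ := by
      have := analyticAt_weierstrassZetaExcept l₀
      fun_prop
    have hζ : ζ[L] =
        (fun z ↦ weierstrassZetaExcept L l₀ z + (1 / (l₀ : ℂ) + z * ((l₀ : ℂ) ^ 2)⁻¹)) +
          (fun z ↦ z - (l₀ : ℂ))⁻¹ := by
      ext z
      simp only [← weierstrassZetaExcept_add L l₀ z, Pi.add_apply, Pi.inv_apply]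
      ring
    rw [hζ]
    refine le_trans (le_min ?_ ?_) (meromorphicOrderAt_add hreg.meromorphicAt (by fun_prop))
    · exact le_trans (by decide) hreg.meromorphicOrderAt_nonneg
    · rw [meromorphicOrderAt_inv, meromorphicOrderAt_id_sub_const]
  · exact le_trans (by decide) (analyticAt_weierstrassZeta hx).meromorphicOrderAt_nonneg

/-- The difference of the two sides of the addition formula
`(ζ(z + w) + ζ(z - w) - 2ζ(z)) (℘(z) - ℘(w)) = ℘'(z)`, as a function of `z`. -/
def additionDefect (L : PeriodPair) (w z : ℂ) : ℂ :=
  (ζ[L] (z + w) + ζ[L] (z - w) - 2 * ζ[L] z) * (℘[L] z - ℘[L] w) - ℘'[L] z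

lemma meromorphic_weierstrassZeta_second_difference (w : ℂ) :
    Meromorphic fun z ↦ ζ[L] (z + w) + ζ[L] (z - w) - 2 * ζ[L] z := by
  have hζ : Meromorphic ζ[L] := meromorphic_weierstrassZeta
  have h₁ := Meromorphic.meromorphic_fun_comp_add_const_iff_meromorphic (c := w).mpr hζ
  have h₂ := Meromorphic.meromorphic_fun_comp_sub_const_iff_meromorphic (c := w).mpr hζ
  fun_prop

lemma meromorphic_additionDefect (w : ℂ) : Meromorphic (additionDefect L w) :=
  ((meromorphic_weierstrassZeta_second_difference w).fun_mul
    (L.meromorphic_weierstrassP.fun_sub (.const _))).fun_sub L.meromorphic_derivWeierstrassP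

lemma additionDefect_neg (w z : ℂ) : additionDefect L w (-z) = -additionDefect L w z := by
  simp only [additionDefect, L.weierstrassP_neg, L.derivWeierstrassP_neg, weierstrassZeta_neg,
    show -z + w = -(z - w) by ring, show -z - w = -(z + w) by ring]
  ring

lemma periodic_additionDefect (w : ℂ) (l : L.lattice) : (additionDefect L w).Periodic l := by
  intro z
  simp only [additionDefect, add_right_comm z (l : ℂ) w, add_sub_right_comm z (l : ℂ) w,
    weierstrassZeta_add_coe, L.weierstrassP_add_coe, L.derivWeierstrassP_add_coe]
  ring

lemma analyticAt_additionDefect {w z : ℂ} (hz : z ∉ L.lattice) (hadd : z + w ∉ L.lattice)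
    (hsub : z - w ∉ L.lattice) : AnalyticAt ℂ (additionDefect L w) z := by
  have := L.analyticOnNhd_weierstrassP z hz
  have := L.analyticOnNhd_derivWeierstrassP z hz
  have := analyticAt_weierstrassZeta hz
  have : AnalyticAt ℂ (fun x ↦ ζ[L] (x + w)) z :=
    (analyticAt_weierstrassZeta hadd).comp_of_eq (by fun_prop) rfl
  have : AnalyticAt ℂ (fun x ↦ ζ[L] (x - w)) z :=
    (analyticAt_weierstrassZeta hsub).comp_of_eq (by fun_prop) rfl
  unfold additionDefect
  fun_prop

lemma neg_one_le_meromorphicOrderAt_weierstrassZeta_second_difference (w x : ℂ) :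
    -1 ≤ meromorphicOrderAt (fun z ↦ ζ[L] (z + w) + ζ[L] (z - w) - 2 * ζ[L] z) x := by
  have hζ : Meromorphic ζ[L] := meromorphic_weierstrassZeta
  have hadd := Meromorphic.meromorphic_fun_comp_add_const_iff_meromorphic (c := w).mpr hζ
  have hsub := Meromorphic.meromorphic_fun_comp_sub_const_iff_meromorphic (c := w).mpr hζ
  have hmul : -1 ≤ meromorphicOrderAt (fun z ↦ -2 * ζ[L] z) x := by
    rw [fun_meromorphicOrderAt_mul (by fun_prop) (hζ x)]
    exact (neg_one_le_meromorphicOrderAt_weierstrassZeta x).trans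
      (le_add_of_nonneg_left analyticAt_const.meromorphicOrderAt_nonneg)
  have hle := le_min (le_min ((neg_one_le_meromorphicOrderAt_weierstrassZeta (x + w)).trans_eq
      meromorphicOrderAt_fun_comp_add_const_eq_meromorphicOrderAt.symm)
    ((neg_one_le_meromorphicOrderAt_weierstrassZeta (x - w)).trans_eq
      meromorphicOrderAt_fun_comp_sub_const_eq_meromorphicOrderAt.symm) |>.trans
        (meromorphicOrderAt_add (hadd x) (hsub x))) hmul
  refine (hle.trans (meromorphicOrderAt_add (by fun_prop) (by fun_prop))).trans_eq ?_
  congr 1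
  ext z
  simp only [Pi.add_apply]
  ring

/-- At a lattice translate of `±w` the simple pole of the first factor meets a zero of the
second. -/
lemma meromorphicOrderAt_additionDefect_nonneg_of_notMem {w x : ℂ} (hx : x ∉ L.lattice) :
    0 ≤ meromorphicOrderAt (additionDefect L w) x := by
  by_cases hw : x + w ∈ L.lattice ∨ x - w ∈ L.lattice
  · have hP : AnalyticAt ℂ (fun z ↦ ℘[L] z - ℘[L] w) x :=
      (L.analyticOnNhd_weierstrassP x hx).fun_sub analyticAt_const
    have hPx : ℘[L] x = ℘[L] w := by
      rcases hw with hw | hw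
      · simpa [L.weierstrassP_neg] using L.weierstrassP_add_coe (-w) ⟨_, hw⟩
      · simpa using L.weierstrassP_add_coe w ⟨_, hw⟩
    have hpos : 0 < meromorphicOrderAt (fun z ↦ ℘[L] z - ℘[L] w) x := by
      rw [← tendsto_zero_iff_meromorphicOrderAt_pos hP.meromorphicAt]
      simpa [hPx] using hP.continuousAt.tendsto.mono_left nhdsWithin_le_nhds
    have hone : 1 ≤ meromorphicOrderAt (fun z ↦ ℘[L] z - ℘[L] w) x := by
      generalize meromorphicOrderAt (fun z ↦ ℘[L] z - ℘[L] w) x = n at hpos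
      cases n with
      | top => exact le_top
      | coe n => exact_mod_cast Int.add_one_le_of_lt (by exact_mod_cast hpos : 0 < n)
    have hmul : 0 ≤ meromorphicOrderAt (fun z ↦ (ζ[L] (z + w) + ζ[L] (z - w) - 2 * ζ[L] z) *
        (℘[L] z - ℘[L] w)) x := by
      rw [fun_meromorphicOrderAt_mul (meromorphic_weierstrassZeta_second_difference w x)
        hP.meromorphicAt]
      simpa using add_le_add (neg_one_le_meromorphicOrderAt_weierstrassZeta_second_difference w x)
        hone
    have hP' := (L.analyticOnNhd_derivWeierstrassP x hx).neg
    have hmer : MeromorphicAt (fun z ↦ (ζ[L] (z + w) + ζ[L] (z - w) - 2 * ζ[L] z) *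
        (℘[L] z - ℘[L] w)) x :=
      (meromorphic_weierstrassZeta_second_difference w x).fun_mul hP.meromorphicAt
    refine (le_min hmul hP'.meromorphicOrderAt_nonneg).trans
      ((meromorphicOrderAt_add hmer hP'.meromorphicAt).trans_eq ?_)
    exact congrArg (meromorphicOrderAt · x) (funext fun z ↦ (sub_eq_add_neg _ _).symm)
  · push Not at hw
    exact (analyticAt_additionDefect hx hw.1 hw.2).meromorphicOrderAt_nonneg

lemma exists_weierstrassPExcept_zero_eq_mul :
    ∃ b : ℂ → ℂ, AnalyticAt ℂ b 0 ∧ ∀ᶠ z in 𝓝 0, ℘[L - (0 : ℂ)] z = z * b z := by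
  simpa using (natCast_le_analyticOrderAt (L.analyticAt_weierstrassPExcept 0) (n := 1)).mp
    ((natCast_le_analyticOrderAt_iff_iteratedDeriv_eq_zero
      (L.analyticAt_weierstrassPExcept 0)).mpr fun i hi ↦ by simp [Nat.lt_one_iff.mp hi])

lemma exists_weierstrassZeta_second_difference_eq {w : ℂ} (hw : w ∉ L.lattice) :
    ∃ a : ℂ → ℂ, AnalyticAt ℂ a 0 ∧ ∀ᶠ z in 𝓝 0,
      ζ[L] (z + w) + ζ[L] (z - w) - 2 * ζ[L] z = -2 / z - 2 * ℘[L] w * z + z ^ 2 * a z := by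
  set k : ℂ → ℂ := fun z ↦
    ζ[L] (z + w) + ζ[L] (z - w) - 2 * weierstrassZetaExcept L 0 z + 2 * ℘[L] w * z
  have hk : AnalyticAt ℂ k 0 := by
    have : AnalyticAt ℂ (weierstrassZetaExcept L 0) 0 := analyticAt_weierstrassZetaExcept 0
    have : AnalyticAt ℂ (fun x ↦ ζ[L] (x + w)) 0 :=
      (analyticAt_weierstrassZeta hw).comp_of_eq (by fun_prop) (zero_add w)
    have : AnalyticAt ℂ (fun x ↦ ζ[L] (x - w)) 0 :=
      (analyticAt_weierstrassZeta (z := -w) (by simpa)).comp_of_eq (by fun_prop) (zero_sub w)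
    fun_prop
  have hk₀ : k 0 = 0 := by
    have hreg₀ := weierstrassZeta_eq_weierstrassZetaExcept_zero_add L 0
    rw [weierstrassZeta_zero, div_zero, add_zero] at hreg₀
    simp [k, weierstrassZeta_neg, ← hreg₀]
  have hk₁ : deriv k 0 = 0 := by
    have hadd := (hasDerivAt_weierstrassZeta L (z := 0 + w) (by simpa)).comp_add_const 0 w
    have hsub := (hasDerivAt_weierstrassZeta L (z := 0 - w) (by simpa)).comp_sub_const 0 w
    have hreg := hasDerivAt_weierstrassZetaExcept L (l₀ := 0) (z := 0) (by simp)
    have hk' := ((hadd.fun_add hsub).fun_sub (hreg.const_mul 2)).fun_add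
      ((hasDerivAt_id' 0).const_mul (2 * ℘[L] w))
    refine hk'.deriv.trans ?_
    rw [zero_add, zero_sub, L.weierstrassP_neg, ZeroMemClass.coe_zero, L.weierstrassPExcept_zero]
    ring
  obtain ⟨a, ha, hka⟩ := (natCast_le_analyticOrderAt hk (n := 2)).mp
    ((natCast_le_analyticOrderAt_iff_iteratedDeriv_eq_zero hk).mpr fun i hi ↦ by
      interval_cases i <;> simp [hk₀, hk₁])
  refine ⟨a, ha, hka.mono fun z hz ↦ ?_⟩
  simp only [k, sub_zero, smul_eq_mul] at hz
  rw [← hz, weierstrassZeta_eq_weierstrassZetaExcept_zero_add L z]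
  ring

lemma meromorphicOrderAt_additionDefect_zero_nonneg {w : ℂ} (hw : w ∉ L.lattice) :
    0 ≤ meromorphicOrderAt (additionDefect L w) 0 := by
  obtain ⟨a, ha, hζ⟩ := exists_weierstrassZeta_second_difference_eq hw
  obtain ⟨b, hb, hP⟩ := exists_weierstrassPExcept_zero_eq_mul (L := L)
  have := L.analyticAt_weierstrassPExcept 0
  have := L.analyticAt_derivWeierstrassPExcept 0
  have hF : AnalyticAt ℂ (fun z ↦ a z - 2 * b z +
      (-2 * ℘[L] w * z + z ^ 2 * a z) * (℘[L - (0 : ℂ)] z - ℘[L] w) - ℘'[L - (0 : ℂ)] z) 0 := by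
    fun_prop
  refine hF.meromorphicOrderAt_nonneg.trans_eq (meromorphicOrderAt_congr ?_)
  filter_upwards [self_mem_nhdsWithin, hζ.filter_mono nhdsWithin_le_nhds,
    hP.filter_mono nhdsWithin_le_nhds] with z (hz : z ≠ 0) hζz hPz
  have hPol : ℘[L] z = ℘[L - (0 : ℂ)] z + 1 / z ^ 2 := by
    simp [← L.weierstrassPExcept_add 0 z]
  have hPol' : ℘'[L] z = ℘'[L - (0 : ℂ)] z - 2 / z ^ 3 := by
    simp [← L.derivWeierstrassPExcept_sub 0 z]
  rw [additionDefect, hζz, hPol, hPol', hPz]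
  field_simp
  ring

lemma meromorphicOrderAt_additionDefect_nonneg {w : ℂ} (hw : w ∉ L.lattice) (x : ℂ) :
    0 ≤ meromorphicOrderAt (additionDefect L w) x := by
  by_cases hx : x ∈ L.lattice
  · have hper : additionDefect L w ∘ (· + x) = additionDefect L w :=
      funext (periodic_additionDefect w ⟨x, hx⟩)
    rw [← zero_add x, ← meromorphicOrderAt_comp_add_const_eq_meromorphicOrderAt, hper]
    exact meromorphicOrderAt_additionDefect_zero_nonneg hw
  · exact meromorphicOrderAt_additionDefect_nonneg_of_notMem hx

theorem weierstrassZeta_add_add_weierstrassZeta_sub {z w : ℂ} (hz : z ∉ L.lattice)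
    (hw : w ∉ L.lattice) (hadd : z + w ∉ L.lattice) (hsub : z - w ∉ L.lattice) :
    (ζ[L] (z + w) + ζ[L] (z - w) - 2 * ζ[L] z) * (℘[L] z - ℘[L] w) = ℘'[L] z := by
  obtain ⟨c, hc⟩ := exists_eventuallyEq_const_of_periodic_of_meromorphicOrderAt_nonneg
    (periodic_additionDefect w) (meromorphic_additionDefect w)
    (meromorphicOrderAt_additionDefect_nonneg hw)
  have heq {x : ℂ} (hx : x ∉ L.lattice) (hadd : x + w ∉ L.lattice) (hsub : x - w ∉ L.lattice) :
      additionDefect L w x = c :=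
    let hcont := (analyticAt_additionDefect hx hadd hsub).continuousAt
    ((hcont.eventuallyEq_nhds_iff_eventuallyEq_nhdsNE continuousAt_const).mp (hc x)).eq_of_nhds
  have hneg : additionDefect L w (-z) = c := heq (by simpa)
    (by rwa [neg_add_eq_sub, ← neg_sub, neg_mem_iff])
    (by rwa [← neg_add', neg_mem_iff])
  rw [additionDefect_neg, heq hz hadd hsub, neg_eq_self] at hneg
  rw [← sub_eq_zero, ← hneg, ← heq hz hadd hsub, additionDefect]

end AdditionFormula

section SecondDerivative

lemma isPreconnected_compl_lattice : IsPreconnected (L.lattice : Set ℂ)ᶜ :=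
  have : Countable L.lattice := countable_of_Lindelof_of_discrete (X := L.lattice)
  ((Set.to_countable (L.lattice : Set ℂ)).isConnected_compl_of_one_lt_rank (by simp)).isPreconnected

lemma exists_derivWeierstrassP_ne_zero : ∃ z ∉ L.lattice, ℘'[L] z ≠ 0 := by
  by_contra! hzero
  have hlim : Tendsto (fun z ↦ z ^ 3 * ℘'[L - (0 : ℂ)] z) (𝓝[≠] 0) (𝓝 (0 ^ 3 * _)) :=
    ((continuous_id.pow 3).continuousAt.mul
      (L.analyticAt_derivWeierstrassPExcept 0).continuousAt).mono_left nhdsWithin_le_nhds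
  have htwo : (fun z ↦ z ^ 3 * ℘'[L - (0 : ℂ)] z) =ᶠ[𝓝[≠] 0] fun _ ↦ 2 := by
    filter_upwards [self_mem_nhdsWithin,
      nhdsWithin_le_nhds (L.compl_lattice_sdiff_singleton_mem_nhds 0)] with z (hz : z ≠ 0) hzL
    have hpole := L.derivWeierstrassPExcept_sub 0 z
    rw [hzero z fun h ↦ hzL ⟨h, hz⟩, ZeroMemClass.coe_zero, sub_zero, sub_eq_zero] at hpole
    rw [hpole]
    field
  simpa using tendsto_nhds_unique (hlim.congr' htwo) tendsto_const_nhds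

lemma hasDerivAt_weierstrassP {z : ℂ} (hz : z ∉ L.lattice) : HasDerivAt ℘[L] (℘'[L] z) z := by
  simpa only [L.deriv_weierstrassP] using
    (L.analyticOnNhd_weierstrassP z hz).differentiableAt.hasDerivAt

lemma hasDerivAt_derivWeierstrassP {z : ℂ} (hz : z ∉ L.lattice) :
    HasDerivAt ℘'[L] (6 * ℘[L] z ^ 2 - L.g₂ / 2) z := by
  have hzero : ∀ x ∉ L.lattice, ℘'[L] x * (2 * deriv ℘'[L] x - (12 * ℘[L] x ^ 2 - L.g₂)) = 0 := by
    intro x hx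
    have hP := hasDerivAt_weierstrassP L hx
    have hP' := (L.analyticOnNhd_derivWeierstrassP x hx).differentiableAt.hasDerivAt
    have hlhs := hP'.fun_pow 2
    have hrhs := (((hP.fun_pow 3).const_mul 4).fun_sub (hP.const_mul L.g₂)).sub_const L.g₃
    have hode : (℘'[L] · ^ 2) =ᶠ[𝓝 x] fun y ↦ 4 * ℘[L] y ^ 3 - L.g₂ * ℘[L] y - L.g₃ :=
      eventually_of_mem (L.isClosed_lattice.isOpen_compl.mem_nhds hx) L.derivWeierstrassP_sq
    have hderiv := hlhs.unique (hrhs.congr_of_eventuallyEq hode)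
    simp only [Nat.add_one_sub_one, pow_one, Nat.cast_ofNat] at hderiv
    linear_combination hderiv
  have hP' := (L.analyticOnNhd_derivWeierstrassP z hz).differentiableAt.hasDerivAt
  have hana : AnalyticOnNhd ℂ (fun x ↦ 2 * deriv ℘'[L] x - (12 * ℘[L] x ^ 2 - L.g₂))
      (L.lattice : Set ℂ)ᶜ := fun x hx ↦ by
    have := L.analyticOnNhd_weierstrassP x hx
    have := (L.analyticOnNhd_derivWeierstrassP x hx).deriv
    fun_prop
  obtain ⟨x, hx, hx'⟩ := exists_derivWeierstrassP_ne_zero L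
  have hzero' := (L.analyticOnNhd_derivWeierstrassP.eq_zero_or_eq_zero_of_mul_eq_zero hana hzero
    (isPreconnected_compl_lattice L)).resolve_left fun h ↦ hx' (h x hx)
  refine hP'.congr_deriv ?_
  linear_combination hzero' z hz / 2

variable {L}

lemma derivWeierstrassP_eq_zero_of_two_mul_mem {w : ℂ} (hw : 2 * w ∈ L.lattice) :
    ℘'[L] w = 0 := by
  have h := L.derivWeierstrassP_add_coe (-w) ⟨_, hw⟩
  rw [L.derivWeierstrassP_neg] at h
  exact self_eq_neg.mp ((congrArg ℘'[L] (by ring)).trans h)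

lemma weierstrassP_I_mul_im (hL : ∀ z, conj z ∈ L.lattice ↔ z ∈ L.lattice) (t : ℝ) :
    (℘[L] (I * t)).im = 0 := by
  rw [← conj_eq_iff_im, ← weierstrassP_conj hL, map_mul, conj_I, conj_ofReal, neg_mul,
    L.weierstrassP_neg]

lemma monotoneOn_derivWeierstrassP_I_mul_im (hL : ∀ z, conj z ∈ L.lattice ↔ z ∈ L.lattice)
    (hg₂ : L.g₂.re ≤ 0) {s : Set ℝ} (hs : Convex ℝ s) (hsL : ∀ t ∈ s, I * t ∉ L.lattice) :
    MonotoneOn (fun t : ℝ ↦ (℘'[L] (I * t)).im) s := by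
  have hderiv {t : ℝ} (ht : t ∈ s) : HasDerivAt (fun t : ℝ ↦ (℘'[L] (I * t)).im)
      (6 * (℘[L] (I * t)).re ^ 2 - L.g₂.re / 2) t := by
    have hreal : (((℘[L] (I * t)).re : ℝ) : ℂ) = ℘[L] (I * t) :=
      Complex.ext rfl (weierstrassP_I_mul_im hL t).symm
    have h := ((hasDerivAt_derivWeierstrassP L (hsL t ht)).comp (t : ℂ)
      ((hasDerivAt_id' (t : ℂ)).const_mul I)).comp_ofReal
    refine (imCLM.hasFDerivAt.comp_hasDerivAt t h).congr_deriv ?_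
    rw [← hreal]
    simp [← ofReal_pow]
  refine monotoneOn_of_deriv_nonneg hs (fun t ht ↦ (hderiv ht).continuousAt.continuousWithinAt)
    (fun t ht ↦ (hderiv (interior_subset ht)).differentiableAt.differentiableWithinAt) fun t ht ↦ ?_
  rw [(hderiv (interior_subset ht)).deriv]
  linarith [sq_nonneg (℘[L] (I * t)).re]

end SecondDerivative

section Eisenstein

variable {L}

lemma hasSum_right_one_div_linear_sub_one_div_linear_succ (τ : ℍ) (m : ℤ) :
    HasSum (fun n : ℤ ↦ 1 / ((m : ℂ) * τ + n) - 1 / (m * τ + n + 1)) 0 := by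
  have h := summable_right_one_div_linear_sub_one_div_linear_succ τ m
  rw [← tsum_symmetricIco_linear_sub_linear_add_one_eq_zero τ m,
    tsum_eq_of_summable_unconditional h]
  exact h.hasSum

lemma weierstrassZeta_summand_neg_mul {a x : ℂ} (ha : a ≠ 0) :
    1 / (-a - a * x) + 1 / (a * x) + -a / (a * x) ^ 2 =
      (1 / x - 1 / (x + 1) - x ^ (-2 : ℤ)) / a := by
  rw [show -a - a * x = -(a * (x + 1)) by ring, zpow_neg, zpow_ofNat]
  simp only [inv_neg, mul_inv, mul_pow, div_eq_mul_inv]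
  field

/-- Summing the series of `ζ(-ω₁)` row by row, the terms `1 / (z - l) + 1 / l` telescope to zero
and the terms `z / l ^ 2` leave the rows of `G2`. -/
lemma weierstrassZeta_ω₁ {τ : ℍ} (hτ : L.ω₂ = L.ω₁ * τ) : ζ[L] L.ω₁ = G2 τ / L.ω₁ := by
  have hω₁ : L.ω₁ ≠ 0 := by simpa using L.indep.ne_zero 0
  have hsum := ((Equiv.prodComm ℤ ℤ).trans L.latticeEquivProd.symm.toEquiv).hasSum_iff.mpr
    (hasSum_weierstrassZeta L (-L.ω₁))
  have hrow (m : ℤ) := ((hasSum_right_one_div_linear_sub_one_div_linear_succ τ m).sub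
    (e2Summand_summable m τ).hasSum).div_const L.ω₁
  have hrows : HasSum (fun m ↦ (0 - e2Summand m τ) / L.ω₁) (ζ[L] (-L.ω₁)) := by
    refine hsum.prod_fiberwise fun m ↦ (hrow m).congr_fun fun n ↦ ?_
    have hl : (L.latticeEquivProd.symm (n, m) : ℂ) = L.ω₁ * (m * τ + n) := by
      rw [L.latticeEquiv_symm_apply, hτ]
      ring
    simpa [hl, eisSummand] using weierstrassZeta_summand_neg_mul hω₁ (x := m * τ + n)
  have hneg : ζ[L] (-L.ω₁) = ∑'[SummationFilter.symmetricIcc ℤ] m, (0 - e2Summand m τ) / L.ω₁ := by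
    rw [tsum_eq_of_summable_unconditional hrows.summable, hrows.tsum_eq]
  rw [← neg_neg (ζ[L] L.ω₁), ← weierstrassZeta_neg, hneg, G2]
  simp [tsum_div_const, neg_div, tsum_neg]

end Eisenstein

section EisensteinIntegers

lemma tau_re : tau.re = -1 / 2 := by simp [tau]

lemma tau_im : tau.im = √3 / 2 := by simp [tau]

lemma coe_ρ : (ρ : ℂ) = tau := Complex.ext tau_re.symm tau_im.symm

lemma tau_sq : tau ^ 2 = -1 - tau := by
  rw [← coe_ρ, ρ_sq]
  ring

lemma tau_pow_three : tau ^ 3 = 1 := by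
  linear_combination (tau - 1) * tau_sq

lemma tau_ne_zero : tau ≠ 0 := coe_ρ ▸ ρ.ne_zero

lemma tau_ne_one : tau ≠ 1 := ne_of_apply_ne Complex.re (by norm_num [tau_re])

lemma inv_tau : tau⁻¹ = tau ^ 2 :=
  inv_eq_of_mul_eq_one_right (by linear_combination tau_pow_three)

lemma conj_tau : conj tau = -1 - tau := by
  refine Complex.ext ?_ ?_ <;> norm_num [tau_re, tau_im]

lemma sqrtm3_eq_one_add_two_mul_tau : sqrtm3 = 1 + 2 * tau := by
  rw [sqrtm3, tau]
  ring

lemma sqrtm3_sq : sqrtm3 ^ 2 = -3 := by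
  rw [sqrtm3_eq_one_add_two_mul_tau]
  linear_combination 4 * tau_sq

lemma sqrtm3_mul_ofReal (x : ℝ) : sqrtm3 * x = I * (√3 * x : ℝ) := by
  rw [sqrtm3]
  push_cast
  ring

lemma sqrtm3_mul_div_ofNat (x : ℝ) (n : ℕ) [n.AtLeastTwo] :
    sqrtm3 * x / ofNat(n) = I * (√3 * (x / ofNat(n)) : ℝ) := by
  rw [← sqrtm3_mul_ofReal]
  push_cast
  ring

lemma mem_Eis_iff {z : ℂ} : z ∈ Eis ↔ ∃ m n : ℤ, m + n * tau = z := by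
  refine ⟨fun hz ↦ ?_, ?_⟩
  · induction hz using Subring.closure_induction with
    | mem x hx => exact ⟨0, 1, by simp_all⟩
    | zero => exact ⟨0, 0, by simp⟩
    | one => exact ⟨1, 0, by simp⟩
    | add x y _ _ hx hy =>
      obtain ⟨⟨a, b, rfl⟩, c, d, rfl⟩ := hx, hy
      exact ⟨a + c, b + d, by push_cast; ring⟩
    | neg x _ hx =>
      obtain ⟨a, b, rfl⟩ := hx
      exact ⟨-a, -b, by push_cast; ring⟩
    | mul x y _ _ hx hy =>
      obtain ⟨⟨a, b, rfl⟩, c, d, rfl⟩ := hx, hy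
      refine ⟨a * c - b * d, a * d + b * c - b * d, ?_⟩
      push_cast
      linear_combination (-b * d : ℂ) * tau_sq
  · rintro ⟨m, n, rfl⟩
    exact add_mem (intCast_mem _ m) (mul_mem (intCast_mem _ n) tauO.2)

lemma sqrtm3_mem_Eis : sqrtm3 ∈ Eis :=
  mem_Eis_iff.mpr ⟨1, 2, by simp [sqrtm3_eq_one_add_two_mul_tau]⟩

lemma conj_mem_Eis {z : ℂ} (hz : z ∈ Eis) : conj z ∈ Eis := by
  obtain ⟨m, n, rfl⟩ := mem_Eis_iff.mp hz
  refine mem_Eis_iff.mpr ⟨m - n, -n, ?_⟩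
  simp only [map_add, map_mul, map_intCast, conj_tau]
  push_cast
  ring

/-- `ρ` is fixed by `T⁻¹ S`, so the anomaly in the transformation of `G2` under `S` determines
`G2 ρ`. -/
lemma sqrtm3_mul_G2_ρ : sqrtm3 * G2 ρ = 2 * π * I := by
  have hS : ((ModularGroup.S • ρ : ℍ) : ℂ) = ρ + 1 := by
    rw [modular_S_smul]
    refine inv_eq_of_mul_eq_one_right ?_
    rw [coe_ρ]
    linear_combination -tau_sq
  have hT : G2 (ModularGroup.S • ρ) = G2 ρ := by
    simp_rw [G2_eq_tsum_cexp, hS, mul_add, mul_one, Complex.exp_add, Complex.exp_two_pi_mul_I,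
      mul_one]
  have h := G2_S_transform ρ
  rw [hT, coe_ρ, ← inv_pow, div_eq_mul_inv, inv_tau] at h
  rw [sqrtm3_eq_one_add_two_mul_tau]
  linear_combination tau * h + (2 * π * I + G2 ρ * tau ^ 2) * tau_pow_three
    + G2 ρ * tau_sq

end EisensteinIntegers

section Hexagonal

variable {L} (hτ : L.ω₂ = L.ω₁ * tau)
include hτ

lemma mem_lattice_iff_exists_mem_Eis {z : ℂ} : z ∈ L.lattice ↔ ∃ a ∈ Eis, z = L.ω₁ * a := by
  rw [L.mem_lattice, hτ]
  constructor
  · rintro ⟨m, n, rfl⟩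
    exact ⟨_, mem_Eis_iff.mpr ⟨m, n, rfl⟩, by ring⟩
  · rintro ⟨a, ha, rfl⟩
    obtain ⟨m, n, rfl⟩ := mem_Eis_iff.mp ha
    exact ⟨m, n, by ring⟩

lemma mul_mem_lattice_of_mem_Eis {a z : ℂ} (ha : a ∈ Eis) (hz : z ∈ L.lattice) :
    a * z ∈ L.lattice := by
  rw [mem_lattice_iff_exists_mem_Eis hτ] at hz ⊢
  obtain ⟨b, hb, rfl⟩ := hz
  exact ⟨a * b, mul_mem ha hb, by ring⟩

lemma tau_mul_mem_lattice_iff (z : ℂ) : tau * z ∈ L.lattice ↔ z ∈ L.lattice := by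
  refine ⟨fun hz ↦ ?_, mul_mem_lattice_of_mem_Eis hτ tauO.2⟩
  convert mul_mem_lattice_of_mem_Eis hτ (pow_mem tauO.2 2) hz using 1
  change z = tau ^ 2 * (tau * z)
  linear_combination -z * tau_pow_three

lemma weierstrassZeta_tau_mul (z : ℂ) : ζ[L] (tau * z) = tau ^ 2 * ζ[L] z := by
  rw [weierstrassZeta_mul_left tau_ne_zero (tau_mul_mem_lattice_iff hτ), inv_tau]

lemma weierstrassP_tau_mul (z : ℂ) : ℘[L] (tau * z) = tau * ℘[L] z := by
  rw [weierstrassP_mul_left tau_ne_zero (tau_mul_mem_lattice_iff hτ), ← inv_pow, inv_tau]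
  linear_combination ℘[L] z * tau * tau_pow_three

lemma g₂_eq_zero : L.g₂ = 0 := by
  have h : tau ^ 4 ≠ 1 := by
    rw [pow_succ, tau_pow_three, one_mul]
    exact tau_ne_one
  rw [PeriodPair.g₂, G_eq_zero_of_pow_ne_one tau_ne_zero (tau_mul_mem_lattice_iff hτ) h, mul_zero]

lemma sqrtm3_mul_weierstrassZeta_ω₁ : sqrtm3 * ζ[L] L.ω₁ = 2 * π * I / L.ω₁ := by
  rw [weierstrassZeta_ω₁ (τ := ρ) (by rw [hτ, coe_ρ]), mul_div_assoc', sqrtm3_mul_G2_ρ]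

lemma weierstrassZeta_ω₂ : ζ[L] L.ω₂ = tau ^ 2 * ζ[L] L.ω₁ := by
  rw [hτ, mul_comm, weierstrassZeta_tau_mul hτ]

lemma weierstrassZeta_ω₁_add_ω₂ : ζ[L] (L.ω₁ + L.ω₂) = -tau * ζ[L] L.ω₁ := by
  rw [weierstrassZeta_add_coe L L.ω₁ ⟨_, L.ω₂_mem_lattice⟩, weierstrassZeta_ω₂ hτ]
  linear_combination ζ[L] L.ω₁ * tau_sq

lemma weierstrassZeta_sqrtm3_mul_ω₁ : ζ[L] (sqrtm3 * L.ω₁) = -(2 * π * I / L.ω₁) := by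
  have hsplit : sqrtm3 * L.ω₁ = L.ω₁ + L.ω₂ + L.ω₂ := by
    rw [hτ, sqrtm3_eq_one_add_two_mul_tau]
    ring
  rw [hsplit, weierstrassZeta_add_coe L _ ⟨_, L.ω₂_mem_lattice⟩,
    weierstrassZeta_ω₁_add_ω₂ hτ, weierstrassZeta_ω₂ hτ, ← sqrtm3_mul_weierstrassZeta_ω₁ hτ,
    sqrtm3_eq_one_add_two_mul_tau]
  linear_combination ζ[L] L.ω₁ * tau_sq

lemma tau_mul_sqrtm3_mul_ω₁_div_three :
    tau * (sqrtm3 * L.ω₁ / 3) = sqrtm3 * L.ω₁ / 3 - (L.ω₁ + L.ω₂) := by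
  rw [hτ, sqrtm3_eq_one_add_two_mul_tau]
  linear_combination 2 * L.ω₁ / 3 * tau_sq

lemma weierstrassP_sqrtm3_mul_ω₁_div_three : ℘[L] (sqrtm3 * L.ω₁ / 3) = 0 := by
  have h := weierstrassP_tau_mul hτ (sqrtm3 * L.ω₁ / 3)
  rw [tau_mul_sqrtm3_mul_ω₁_div_three hτ, L.weierstrassP_sub_coe _
    ⟨_, add_mem L.ω₁_mem_lattice L.ω₂_mem_lattice⟩] at h
  exact (eq_zero_or_eq_zero_of_mul_eq_zero (a := tau - 1) (by linear_combination -h)).resolve_left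
    (sub_ne_zero.mpr tau_ne_one)

lemma weierstrassZeta_sqrtm3_mul_ω₁_div_three :
    ζ[L] (sqrtm3 * L.ω₁ / 3) = -(2 * π * I / (3 * L.ω₁)) := by
  have h := weierstrassZeta_tau_mul hτ (sqrtm3 * L.ω₁ / 3)
  rw [tau_mul_sqrtm3_mul_ω₁_div_three hτ, weierstrassZeta_sub_coe L _
    ⟨_, add_mem L.ω₁_mem_lattice L.ω₂_mem_lattice⟩, weierstrassZeta_ω₁_add_ω₂ hτ] at h
  have hζ : sqrtm3 * ζ[L] (sqrtm3 * L.ω₁ / 3) = ζ[L] L.ω₁ := by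
    refine mul_left_cancel₀ tau_ne_zero ?_
    rw [sqrtm3_eq_one_add_two_mul_tau] at h ⊢
    linear_combination -h + ζ[L] ((1 + 2 * tau) * L.ω₁ / 3) * tau_sq
  rw [show 2 * π * I / (3 * L.ω₁) = 2 * π * I / L.ω₁ / 3 by ring,
    ← sqrtm3_mul_weierstrassZeta_ω₁ hτ, ← hζ]
  linear_combination ζ[L] (sqrtm3 * L.ω₁ / 3) / 3 * sqrtm3_sq

end Hexagonal

section RealHexagonal

variable {L} {ω : ℝ} (hω₁ : L.ω₁ = ω) (hτ : L.ω₂ = L.ω₁ * tau)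
include hω₁ hτ

lemma conj_mem_lattice_iff (z : ℂ) : conj z ∈ L.lattice ↔ z ∈ L.lattice := by
  have hconj {z : ℂ} (hz : z ∈ L.lattice) : conj z ∈ L.lattice := by
    rw [mem_lattice_iff_exists_mem_Eis hτ, hω₁] at hz ⊢
    obtain ⟨a, ha, rfl⟩ := hz
    exact ⟨_, conj_mem_Eis ha, by simp⟩
  exact ⟨fun hz ↦ by simpa using hconj hz, hconj⟩

lemma I_mul_notMem_lattice {t : ℝ} (ht₀ : 0 < t) (ht : t < √3 * ω) : I * t ∉ L.lattice := by
  intro hmem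
  obtain ⟨m, n, h⟩ := L.mem_lattice.mp hmem
  rw [hτ, hω₁] at h
  have hre : m * ω + n * (ω * (-1 / 2)) = 0 := by simpa [tau_re] using congrArg Complex.re h
  have him : n * (ω * (√3 / 2)) = t := by simpa [tau_im] using congrArg Complex.im h
  have hm : t = m * (√3 * ω) := by linear_combination -him - √3 * hre
  have hω : 0 < √3 * ω := ht₀.trans ht
  rw [hm] at ht₀ ht
  have h₀ : (0 : ℝ) < m := pos_of_mul_pos_left ht₀ hω.le
  have h₁ : (m : ℝ) < 1 := by rwa [mul_lt_iff_lt_one_left hω] at ht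
  norm_cast at h₀ h₁
  omega

lemma derivWeierstrassP_sqrtm3_mul_div_two : ℘'[L] (sqrtm3 * ω / 2) = 0 := by
  refine derivWeierstrassP_eq_zero_of_two_mul_mem ?_
  rw [mul_div_cancel₀ _ two_ne_zero, ← hω₁]
  exact mul_mem_lattice_of_mem_Eis hτ sqrtm3_mem_Eis L.ω₁_mem_lattice

lemma sqrtm3_mul_div_notMem_lattice {n : ℕ} [n.AtLeastTwo] (hω : 0 < ω) :
    sqrtm3 * ω / ofNat(n) ∉ L.lattice := by
  rw [sqrtm3_mul_div_ofNat]
  have hn : (1 : ℝ) < ofNat(n) := Nat.one_lt_ofNat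
  have : (0 : ℝ) < ofNat(n) := Nat.ofNat_pos
  refine I_mul_notMem_lattice hω₁ hτ (by positivity) ?_
  gcongr
  exact div_lt_self hω hn

lemma weierstrassP_sqrtm3_mul_div_two_pow_three (hω : 0 < ω) :
    4 * ℘[L] (sqrtm3 * ω / 2) ^ 3 = L.g₃ := by
  have h := L.derivWeierstrassP_sq _ (sqrtm3_mul_div_notMem_lattice hω₁ hτ (n := 2) hω)
  rw [derivWeierstrassP_sqrtm3_mul_div_two hω₁ hτ, g₂_eq_zero hτ] at h
  linear_combination -h

lemma weierstrassP_sqrtm3_mul_div_two_mul_cbrt4 (hω : 0 < ω) (hg₃ : L.g₃ = 1) :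
    ℘[L] (sqrtm3 * ω / 2) * cbrt4 = 1 := by
  have hpow := weierstrassP_sqrtm3_mul_div_two_pow_three hω₁ hτ hω
  obtain ⟨e, he⟩ := conj_eq_iff_real.mp (conj_eq_iff_im.mpr
    (weierstrassP_I_mul_im (conj_mem_lattice_iff hω₁ hτ) (√3 * (ω / 2))))
  rw [sqrtm3_mul_div_ofNat, he, hg₃] at hpow
  rw [sqrtm3_mul_div_ofNat, he, cbrt4]
  have hcbrt : ((4 : ℝ) ^ ((1 : ℝ) / 3)) ^ 3 = 4 := by
    simpa using Real.rpow_inv_natCast_pow (n := 3) zero_le_four three_ne_zero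
  norm_cast at hpow ⊢
  rw [← (show Odd 3 by decide).pow_inj, mul_pow, hcbrt]
  linarith

lemma derivWeierstrassP_sqrtm3_mul_div_three (hω : 0 < ω) (hg₃ : L.g₃ = 1) :
    ℘'[L] (sqrtm3 * ω / 3) = -I := by
  have hsq : ℘'[L] (sqrtm3 * ω / 3) ^ 2 = I ^ 2 := by
    have h := weierstrassP_sqrtm3_mul_ω₁_div_three hτ
    rw [hω₁] at h
    rw [L.derivWeierstrassP_sq _ (sqrtm3_mul_div_notMem_lattice hω₁ hτ (n := 3) hω), h,
      g₂_eq_zero hτ, hg₃, I_sq]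
    ring
  refine (sq_eq_sq_iff_eq_or_eq_neg.mp hsq).resolve_left fun hI ↦ ?_
  have hmono := monotoneOn_derivWeierstrassP_I_mul_im (conj_mem_lattice_iff hω₁ hτ)
    (by simp [g₂_eq_zero hτ]) (convex_Ioo 0 (√3 * ω))
    fun t ht ↦ I_mul_notMem_lattice hω₁ hτ ht.1 ht.2
  have hle := hmono (a := √3 * (ω / 3)) (b := √3 * (ω / 2)) ⟨by positivity, by gcongr; linarith⟩
    ⟨by positivity, by gcongr; linarith⟩ (by gcongr; norm_num)
  simp only [← sqrtm3_mul_div_ofNat, hI, derivWeierstrassP_sqrtm3_mul_div_two hω₁ hτ,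
    Complex.I_im, Complex.zero_im] at hle
  linarith

lemma weierstrassZeta_sqrtm3_mul_div_six (hω : 0 < ω) (hg₃ : L.g₃ = 1) :
    ζ[L] (sqrtm3 * ω / 6) = -(π * I) / (3 * ω) - I / 2 * cbrt4 := by
  set u : ℂ := sqrtm3 * ω / 3 with hu
  set w : ℂ := sqrtm3 * ω / 2
  set z : ℂ := sqrtm3 * ω / 6
  have hsub : u - w = -z := by ring
  have hadd : u + w = -z + sqrtm3 * ω := by ring
  have hmem : sqrtm3 * ω ∈ L.lattice := by
    rw [← hω₁]
    exact mul_mem_lattice_of_mem_Eis hτ sqrtm3_mem_Eis L.ω₁_mem_lattice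
  have hz_notMem : z ∉ L.lattice := sqrtm3_mul_div_notMem_lattice hω₁ hτ (n := 6) hω
  have hζu : ζ[L] u = -(2 * π * I / (3 * ω)) := by
    rw [hu, ← hω₁, weierstrassZeta_sqrtm3_mul_ω₁_div_three hτ]
  have hζη : ζ[L] (sqrtm3 * ω) = -(2 * π * I / ω) := by
    rw [← hω₁, weierstrassZeta_sqrtm3_mul_ω₁ hτ]
  have hPu : ℘[L] u = 0 := by rw [hu, ← hω₁, weierstrassP_sqrtm3_mul_ω₁_div_three hτ]
  have hPw := weierstrassP_sqrtm3_mul_div_two_mul_cbrt4 hω₁ hτ hω hg₃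
  have h := weierstrassZeta_add_add_weierstrassZeta_sub (L := L) (z := u) (w := w)
    (sqrtm3_mul_div_notMem_lattice hω₁ hτ (n := 3) hω)
    (sqrtm3_mul_div_notMem_lattice hω₁ hτ (n := 2) hω)
    (by rwa [hadd, add_mem_cancel_right hmem, neg_mem_iff]) (by rwa [hsub, neg_mem_iff])
  rw [hadd, weierstrassZeta_add_coe L _ ⟨_, hmem⟩, hsub, weierstrassZeta_neg, hζη, hζu,
    hPu, derivWeierstrassP_sqrtm3_mul_div_three hω₁ hτ hω hg₃] at h
  linear_combination cbrt4 / 2 * h + (-ζ[L] z - π * I / (3 * ω)) * hPw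

lemma inLattice_iff_mem_lattice {z : ℂ} : inLattice ω z ↔ z ∈ L.lattice := by
  rw [inLattice, mem_lattice_iff_exists_mem_Eis hτ, hω₁, Subtype.exists]
  simp only [exists_prop]

lemma tsum_inLattice_ne_zero (f : ℂ → ℂ) :
    ∑' a : {w : ℂ // inLattice ω w ∧ w ≠ 0}, f a =
      ∑' l : L.lattice, if (l : ℂ) = 0 then 0 else f l := by
  have h₁ := tsum_subtype {w : ℂ | inLattice ω w ∧ w ≠ 0} f
  have h₂ := tsum_subtype (L.lattice : Set ℂ) fun l ↦ if l = 0 then 0 else f l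
  refine h₁.trans (.trans (tsum_congr fun z ↦ ?_) h₂.symm)
  by_cases hz : z ∈ L.lattice <;> by_cases hz₀ : z = 0 <;>
    simp [inLattice_iff_mem_lattice hω₁ hτ, hz, hz₀]

lemma wp_eq_weierstrassP : wp ω = ℘[L] := by
  ext z
  rw [wp, tsum_inLattice_ne_zero hω₁ hτ fun a ↦ 1 / (z - a) ^ 2 - 1 / a ^ 2,
    ← L.weierstrassPExcept_add 0 z, weierstrassPExcept, add_comm]
  simp

lemma wzeta_eq_weierstrassZeta : wzeta ω = ζ[L] := by
  ext z
  rw [wzeta, tsum_inLattice_ne_zero hω₁ hτ fun a ↦ 1 / (z - a) + 1 / a + z / a ^ 2,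
    weierstrassZeta_eq_weierstrassZetaExcept_zero_add, weierstrassZetaExcept, add_comm]
  simp

end RealHexagonal

/-- The period pair `(ω, ωτ)`, whose lattice is `L_ω = ω·ℤ[τ]`. -/
def hexagonalPeriodPair {ω : ℝ} (hω : ω ≠ 0) : PeriodPair where
  ω₁ := ω
  ω₂ := ω * tau
  indep := by
    rw [LinearIndependent.pair_iff]
    intro s t h
    have ht : t = 0 := by simpa [tau_im, hω] using congrArg Complex.im h
    exact ⟨by simpa [ht, hω] using h, ht⟩

/-- From [Qiu]: `ζ(√−3·ω/6) = −π·i/(3ω) − (i/2)·∛4`, with `√−3 = 1 + 2τ` the square root of `−3` with positive imaginary part.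
Here `ω > 0` is pinned down by the differential equation `℘′² = 4℘³ − 1` for the
lattice `L_ω = ω·ℤ[τ]` (equivalently, the lattice invariants are `g₂ = 0`, `g₃ = 1`). -/
theorem wzeta_value_at_sqrt_point
    (ω : ℝ) (hω : 0 < ω)
    (hODE : ∀ z : ℂ, ¬ inLattice ω z → deriv (wp ω) z ^ 2 = 4 * wp ω z ^ 3 - 1) :
    wzeta ω (sqrtm3 * (ω : ℂ) / 6) =
      -((Real.pi : ℂ) * Complex.I) / (3 * (ω : ℂ)) - (Complex.I / 2) * cbrt4 := by
  let L := hexagonalPeriodPair hω.ne'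
  have hω₁ : L.ω₁ = ω := rfl
  have hτ : L.ω₂ = L.ω₁ * tau := rfl
  have hg₃ : L.g₃ = 1 := by
    have hmem := L.ω₁_div_two_notMem_lattice
    have h := hODE _ (mt (inLattice_iff_mem_lattice hω₁ hτ).mp hmem)
    rw [wp_eq_weierstrassP hω₁ hτ, L.deriv_weierstrassP, L.derivWeierstrassP_sq _ hmem,
      g₂_eq_zero hτ] at h
    linear_combination -h
  rw [wzeta_eq_weierstrassZeta hω₁ hτ]
  exact weierstrassZeta_sqrtm3_mul_div_six hω₁ hτ hω hg₃
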